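/- Let DES = (R, S, Σ_st, F, F_int) be a fully-typed data exchange setting, and assume that for every contentious pair of stds σ_1, σ_2 in Σ_st the object terms o_1 and o_2 are either both variables or both functional terms over the same function symbol. Then DES is consistent if and only if DES is key-covered. -/

import Mathlib

namespace RdfDE

/-- The RDF domain: a countably infinite domain partitioned into IRIs, literals and
blank nodes, with a distinguished infinite subset of null literals. -/
structure RDFDom (Dom : Type) where
  Iri : Set Dom
  Lit : Set Dom
  Blank : Set Dom
  NullLit : Set Dom
  cover : Iri ∪ Lit ∪ Blank = Set.univ
  disjIL : Disjoint Iri Lit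
  disjIB : Disjoint Iri Blank
  disjLB : Disjoint Lit Blank
  nullSub : NullLit ⊆ Lit
  infIri : Iri.Infinite
  infLit : Lit.Infinite
  infBlank : Blank.Infinite
  infNull : NullLit.Infinite

/-- Multiplicities 1, ?, *, +. -/
inductive Mult : Type
  | one | opt | star | plus

/-- A triple constraint `p :: T'^μ`; `target = none` stands for `Lit`. -/
structure TC (Dom Shape : Type) where
  prop : Dom
  target : Option Shape
  mult : Mult

/-- A ShEx schema over the (finite) type `Shape` of shape names. -/
structure ShEx (Dom Shape : Type) (D : RDFDom Dom) where
  δ : Shape → Set (TC Dom Shape)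
  finite : ∀ T, (δ T).Finite
  propIri : ∀ T : Shape, ∀ tc ∈ δ T, tc.prop ∈ D.Iri
  uniqueProp : ∀ T : Shape, ∀ tc1 ∈ δ T, ∀ tc2 ∈ δ T, tc1.prop = tc2.prop → tc1 = tc2

/-- Facts of the target signature `G_T`: a ternary `Triple`, unary `Lit`,
and a unary relation for each shape name. -/
inductive Fact (Dom Shape : Type) : Type
  | triple (s p o : Dom)
  | lit (n : Dom)
  | shape (T : Shape) (n : Dom)

/-- The unary fact `T(n)` where `T ∈ 𝒯 ∪ {Lit}`. -/
def factOf {Dom Shape : Type} (t : Option Shape) (n : Dom) : Fact Dom Shape :=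
  match t with
  | none => .lit n
  | some T => .shape T n

/-- Cardinality constraint imposed by a multiplicity on the set of objects. -/
def multOk {Dom : Type} (μ : Mult) (K : Set Dom) : Prop :=
  match μ with
  | .one => ∃! y, y ∈ K
  | .opt => K.Subsingleton
  | .star => True
  | .plus => K.Nonempty

/-- `J` satisfies every sentence of `Σ_S`: the sort sentences, and for each
triple constraint the sentences `tc`, `mult≥1` (if μ ∈ {1,+}) and `mult≤1` (if μ ∈ {1,?}). -/
def satSigma {Dom Shape : Type} (D : RDFDom Dom) (S : ShEx Dom Shape D)
    (J : Set (Fact Dom Shape)) : Prop :=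
  (∀ (T : Shape) (n : Dom), Fact.shape T n ∈ J → n ∈ D.Iri ∪ D.Blank) ∧
  (∀ n : Dom, Fact.lit n ∈ J → n ∈ D.Lit) ∧
  (∀ T : Shape, ∀ tc ∈ S.δ T,
    (∀ x y : Dom, Fact.shape T x ∈ J → Fact.triple x tc.prop y ∈ J →
      factOf tc.target y ∈ J) ∧
    ((tc.mult = Mult.one ∨ tc.mult = Mult.plus) →
      ∀ x : Dom, Fact.shape T x ∈ J → ∃ y : Dom, Fact.triple x tc.prop y ∈ J) ∧
    ((tc.mult = Mult.one ∨ tc.mult = Mult.opt) →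
      ∀ x y z : Dom, Fact.shape T x ∈ J → Fact.triple x tc.prop y ∈ J →
        Fact.triple x tc.prop z ∈ J → y = z))

/-- Nodes of a graph: values occurring in subject or object position. -/
def nodes {Dom : Type} (G : Set (Dom × Dom × Dom)) : Set Dom :=
  {n | ∃ t ∈ G, t.1 = n ∨ t.2.2 = n}

/-- `G` is an RDF graph: triples lie in `(Iri ∪ Blank) × Iri × (Iri ∪ Blank ∪ Lit)`. -/
def isRDFGraph {Dom : Type} (D : RDFDom Dom) (G : Set (Dom × Dom × Dom)) : Prop :=
  ∀ t ∈ G, t.1 ∈ D.Iri ∪ D.Blank ∧ t.2.1 ∈ D.Iri ∧ t.2.2 ∈ D.Iri ∪ D.Blank ∪ D.Lit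

/-- rdf-to-inst(G, typing). -/
def rdfToInst {Dom Shape : Type} (G : Set (Dom × Dom × Dom))
    (typing : Dom → Set (Option Shape)) : Set (Fact Dom Shape) :=
  {F | (∃ t ∈ G, F = Fact.triple t.1 t.2.1 t.2.2) ∨
       (∃ n ∈ nodes G, ∃ T ∈ typing n, F = factOf T n)}

/-- The graph component of inst-to-rdf(I). -/
def instGraph {Dom Shape : Type} (I : Set (Fact Dom Shape)) : Set (Dom × Dom × Dom) :=
  {t | Fact.triple t.1 t.2.1 t.2.2 ∈ I}

/-- The typing component of inst-to-rdf(I) (empty off the nodes of the graph). -/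
def instTyping {Dom Shape : Type} (I : Set (Fact Dom Shape)) : Dom → Set (Option Shape) :=
  fun n => {T | n ∈ nodes (instGraph I) ∧ factOf T n ∈ I}

/-- `(G, typing)` is correctly typed w.r.t. the schema `S`. -/
def correctlyTyped {Dom Shape : Type} (D : RDFDom Dom) (S : ShEx Dom Shape D)
    (G : Set (Dom × Dom × Dom)) (typing : Dom → Set (Option Shape)) : Prop :=
  ∀ n ∈ nodes G,
    ((none : Option Shape) ∈ typing n → n ∈ D.Lit) ∧
    (∀ T : Shape, some T ∈ typing n →
      n ∈ D.Iri ∪ D.Blank ∧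
      ∀ tc ∈ S.δ T,
        (∀ m : Dom, (n, tc.prop, m) ∈ G → tc.target ∈ typing m) ∧
        multOk tc.mult {m : Dom | (n, tc.prop, m) ∈ G})

/-- A fact `R(t)` of a relational instance. -/
structure RelFact (Dom RSym : Type) (ar : RSym → ℕ) where
  sym : RSym
  args : Fin (ar sym) → Dom

/-- A functional dependency `R : X → Y`. -/
structure Fd (RSym : Type) (ar : RSym → ℕ) where
  sym : RSym
  X : Set (Fin (ar sym))
  Y : Set (Fin (ar sym))

/-- The fd `φ` holds in the relational instance `I`. -/
def fdHolds {Dom RSym : Type} {ar : RSym → ℕ} (I : Set (RelFact Dom RSym ar))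
    (φ : Fd RSym ar) : Prop :=
  ∀ t1 t2 : Fin (ar φ.sym) → Dom,
    (⟨φ.sym, t1⟩ : RelFact Dom RSym ar) ∈ I →
    (⟨φ.sym, t2⟩ : RelFact Dom RSym ar) ∈ I →
    (∀ i ∈ φ.X, t1 i = t2 i) → ∀ j ∈ φ.Y, t1 j = t2 j

/-- A valid instance of the relational schema: finite, over `Lit \ NullLit`,
satisfying all functional dependencies. -/
def validInst {Dom RSym : Type} {ar : RSym → ℕ} (D : RDFDom Dom)
    (fds : Set (Fd RSym ar)) (I : Set (RelFact Dom RSym ar)) : Prop :=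
  I.Finite ∧ (∀ F ∈ I, ∀ i, F.args i ∈ D.Lit \ D.NullLit) ∧ ∀ φ ∈ fds, fdHolds I φ

/-- A relational atom with variables in `V`. -/
structure Atom (RSym : Type) (ar : RSym → ℕ) (V : Type) where
  sym : RSym
  args : Fin (ar sym) → V

/-- The object term of an std: either a variable or a functional term `g(z)`. -/
inductive Obj (FSym : Type) (far : FSym → ℕ) (V : Type) : Type
  | var (v : V)
  | app (g : FSym) (z : Fin (far g) → V)

/-- A fully-typed source-to-target tgd
`∀x,y. φ(x,y) ⇒ Triple(f(x), p, o) ∧ T_s(f(x)) ∧ T_o(o)`, where `x` has length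
`far f`, `y` has length `ny`, and the body uses exactly the variables `x ∪ y`. -/
structure Std (Dom RSym FSym : Type) (ar : RSym → ℕ) (far : FSym → ℕ) where
  f : FSym
  ny : ℕ
  body : Set (Atom RSym ar (Fin (far f) ⊕ Fin ny))
  bodyFinite : body.Finite
  covers : ∀ v : Fin (far f) ⊕ Fin ny, ∃ a ∈ body, ∃ i, a.args i = v
  p : Dom
  obj : Obj FSym far (Fin (far f) ⊕ Fin ny)

/-- The variables `x ∪ y` of an std. -/
abbrev Std.Var {Dom RSym FSym : Type} {ar : RSym → ℕ} {far : FSym → ℕ}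
    (σ : Std Dom RSym FSym ar far) : Type :=
  Fin (far σ.f) ⊕ Fin σ.ny

/-- `ν^{F_int}(o)`. -/
def Obj.eval {Dom FSym : Type} {far : FSym → ℕ} {V : Type}
    (Fint : (f : FSym) → (Fin (far f) → Dom) → Dom) (ν : V → Dom) :
    Obj FSym far V → Dom
  | .var v => ν v
  | .app g z => Fint g (fun i => ν (z i))

/-- The type `T_o` of the object of an std: `Lit` (i.e. `none`) for a variable,
`type(g)` for a functional term `g(z)`. -/
def Std.objType {Dom RSym FSym Shape : Type} {ar : RSym → ℕ} {far : FSym → ℕ}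
    (ftype : FSym → Shape) (σ : Std Dom RSym FSym ar far) : Option Shape :=
  match σ.obj with
  | .var _ => none
  | .app g _ => some (ftype g)

/-- The valuation `ν` maps every atom of the body of `σ` to a fact of `I`. -/
def bodyHolds {Dom RSym FSym : Type} {ar : RSym → ℕ} {far : FSym → ℕ}
    (σ : Std Dom RSym FSym ar far) (ν : σ.Var → Dom)
    (I : Set (RelFact Dom RSym ar)) : Prop :=
  ∀ a ∈ σ.body, (⟨a.sym, fun i => ν (a.args i)⟩ : RelFact Dom RSym ar) ∈ I

/-- `I ∪ J ∪ F_int ⊨ σ`. -/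
def stdSat {Dom RSym FSym Shape : Type} {ar : RSym → ℕ} {far : FSym → ℕ}
    (Fint : (f : FSym) → (Fin (far f) → Dom) → Dom) (ftype : FSym → Shape)
    (σ : Std Dom RSym FSym ar far) (I : Set (RelFact Dom RSym ar))
    (J : Set (Fact Dom Shape)) : Prop :=
  ∀ ν : σ.Var → Dom, bodyHolds σ ν I →
    Fact.triple (Fint σ.f fun i => ν (Sum.inl i)) σ.p (Obj.eval Fint ν σ.obj) ∈ J ∧
    Fact.shape (ftype σ.f) (Fint σ.f fun i => ν (Sum.inl i)) ∈ J ∧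
    factOf (σ.objType ftype) (Obj.eval Fint ν σ.obj) ∈ J

/-- The std conforms to the schema `S`: if `δ(T_s)` contains a triple constraint
on the property `p` of the std then its target is `T_o`. -/
def Std.conforms {Dom RSym FSym Shape : Type} {ar : RSym → ℕ} {far : FSym → ℕ}
    (D : RDFDom Dom) (S : ShEx Dom Shape D) (ftype : FSym → Shape)
    (σ : Std Dom RSym FSym ar far) : Prop :=
  ∀ tc ∈ S.δ (ftype σ.f), tc.prop = σ.p → tc.target = σ.objType ftype

/-- A fully-typed data exchange setting `(R, S, Σ_st, F, F_int)`. -/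
structure DES (Dom RSym FSym Shape : Type) (ar : RSym → ℕ) (far : FSym → ℕ) where
  D : RDFDom Dom
  shex : ShEx Dom Shape D
  fds : Set (Fd RSym ar)
  fdsFin : fds.Finite
  ftype : FSym → Shape
  Fint : (f : FSym) → (Fin (far f) → Dom) → Dom
  FintIri : ∀ f args, Fint f args ∈ D.Iri
  FintInj : ∀ f, Function.Injective (Fint f)
  FintDisj : ∀ f g, f ≠ g → ∀ a b, Fint f a ≠ Fint g b
  stds : Set (Std Dom RSym FSym ar far)
  stdsFin : stds.Finite
  stP : ∀ σ ∈ stds, σ.p ∈ D.Iri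
  stConf : ∀ σ ∈ stds, σ.conforms D shex ftype

variable {Dom RSym FSym Shape : Type} {ar : RSym → ℕ} {far : FSym → ℕ}

/-- `σ1, σ2` are a contentious pair of stds of the setting. -/
def contentious (des : DES Dom RSym FSym Shape ar far)
    (σ1 σ2 : Std Dom RSym FSym ar far) : Prop :=
  σ1 ∈ des.stds ∧ σ2 ∈ des.stds ∧ σ1.f = σ2.f ∧ σ1.p = σ2.p ∧
  ∃ tc ∈ des.shex.δ (des.ftype σ1.f), tc.prop = σ1.p ∧
    tc.target = σ1.objType des.ftype ∧ (tc.mult = Mult.one ∨ tc.mult = Mult.opt)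

/-- `σ1, σ2` are functionally overlapping. -/
def funOverlap (des : DES Dom RSym FSym Shape ar far)
    (σ1 σ2 : Std Dom RSym FSym ar far) : Prop :=
  ∀ I : Set (RelFact Dom RSym ar), validInst des.D des.fds I →
    ∀ (ν1 : σ1.Var → Dom) (ν2 : σ2.Var → Dom),
      bodyHolds σ1 ν1 I → bodyHolds σ2 ν2 I →
      HEq (fun i : Fin (far σ1.f) => ν1 (Sum.inl i))
          (fun i : Fin (far σ2.f) => ν2 (Sum.inl i)) →
      Obj.eval des.Fint ν1 σ1.obj = Obj.eval des.Fint ν2 σ2.obj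

/-- The setting is key-covered. -/
def keyCovered (des : DES Dom RSym FSym Shape ar far) : Prop :=
  ∀ σ1 σ2, contentious des σ1 σ2 → funOverlap des σ1 σ2

/-- `J` is a solution for the valid source instance `I`. -/
def isSolution (des : DES Dom RSym FSym Shape ar far)
    (I : Set (RelFact Dom RSym ar)) (J : Set (Fact Dom Shape)) : Prop :=
  (∀ σ ∈ des.stds, stdSat des.Fint des.ftype σ I J) ∧ satSigma des.D des.shex J

/-- The setting is consistent: every valid source instance has a solution. -/
def consistent (des : DES Dom RSym FSym Shape ar far) : Prop :=
  ∀ I : Set (RelFact Dom RSym ar), validInst des.D des.fds I →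
    ∃ J : Set (Fact Dom Shape), isSolution des I J

/-- The canonical target instance `J_0` of `I`. -/
def canonical (des : DES Dom RSym FSym Shape ar far)
    (I : Set (RelFact Dom RSym ar)) : Set (Fact Dom Shape) :=
  {F | ∃ σ ∈ des.stds, ∃ ν : σ.Var → Dom, bodyHolds σ ν I ∧
    (F = Fact.triple (des.Fint σ.f fun i => ν (Sum.inl i)) σ.p (Obj.eval des.Fint ν σ.obj) ∨
     F = Fact.shape (des.ftype σ.f) (des.Fint σ.f fun i => ν (Sum.inl i)) ∨
     F = factOf (σ.objType des.ftype) (Obj.eval des.Fint ν σ.obj))}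

/-- The vector `z` of variables of the object term of an std (of length 1 if the
object is a variable). -/
def Std.objVars (σ : Std Dom RSym FSym ar far) : Σ n : ℕ, Fin n → σ.Var :=
  match σ.obj with
  | .var v => ⟨1, fun _ => v⟩
  | .app g z => ⟨far g, z⟩

/-- The view `V_σ(I)` as a set of pairs of tuples (encoded as lists):
the values of `x` and the values of `z`. -/
def viewRel (σ : Std Dom RSym FSym ar far) (I : Set (RelFact Dom RSym ar)) :
    Set (List Dom × List Dom) :=
  {ab | ∃ ν : σ.Var → Dom, bodyHolds σ ν I ∧
        ab.1 = List.ofFn (fun i : Fin (far σ.f) => ν (Sum.inl i)) ∧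
        ab.2 = List.ofFn (fun j => ν (σ.objVars.2 j))}

/-- The object terms of `σ1` and `σ2` are either both variables or both functional
terms over the same function symbol. -/
def objMatch (σ1 σ2 : Std Dom RSym FSym ar far) : Prop :=
  (∃ v1 v2, σ1.obj = Obj.var v1 ∧ σ2.obj = Obj.var v2) ∨
  (∃ g z1 z2, σ1.obj = Obj.app g z1 ∧ σ2.obj = Obj.app g z2)

/-- `(T, p)` is a pair for which a fresh value `b^{T,p}` is needed:
`δ(T)` has a constraint on `p` with multiplicity in `{1, +}`. -/
def relevantBP {Dom Shape : Type} {D : RDFDom Dom} (S : ShEx Dom Shape D)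
    (T : Shape) (p : Dom) : Prop :=
  ∃ tc ∈ S.δ T, tc.prop = p ∧ (tc.mult = Mult.one ∨ tc.mult = Mult.plus)

/-- `J_1 = { T'(b^{T,p}) | p :: T'^μ ∈ δ(T), μ ∈ {1,+} }`. -/
def J1set {Dom Shape : Type} {D : RDFDom Dom} (S : ShEx Dom Shape D)
    (b : Shape → Dom → Dom) : Set (Fact Dom Shape) :=
  {F | ∃ T : Shape, ∃ tc ∈ S.δ T, (tc.mult = Mult.one ∨ tc.mult = Mult.plus) ∧
       F = factOf tc.target (b T tc.prop)}

/-- `J_2 = { Triple(b^{T,p}, q, b^{T_1,q}) | T_1(b^{T,p}) ∈ J_1, q :: T_2^μ ∈ δ(T_1), μ ∈ {1,+} }`. -/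
def J2set {Dom Shape : Type} {D : RDFDom Dom} (S : ShEx Dom Shape D)
    (b : Shape → Dom → Dom) : Set (Fact Dom Shape) :=
  {F | ∃ (T1 : Shape) (n : Dom), Fact.shape T1 n ∈ J1set S b ∧
       ∃ tc2 ∈ S.δ T1, (tc2.mult = Mult.one ∨ tc2.mult = Mult.plus) ∧
       F = Fact.triple n tc2.prop (b T1 tc2.prop)}

/-- `J_3 = { Triple(a, p, b^{T,p}) | T(a) ∈ J, p :: T'^μ ∈ δ(T), μ ∈ {1,+},
no Triple(a, p, b') in J }`. -/
def J3set {Dom Shape : Type} {D : RDFDom Dom} (S : ShEx Dom Shape D)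
    (b : Shape → Dom → Dom) (J : Set (Fact Dom Shape)) : Set (Fact Dom Shape) :=
  {F | ∃ (T : Shape) (n : Dom), Fact.shape T n ∈ J ∧
       ∃ tc ∈ S.δ T, (tc.mult = Mult.one ∨ tc.mult = Mult.plus) ∧
       (¬ ∃ y : Dom, Fact.triple n tc.prop y ∈ J) ∧
       F = Fact.triple n tc.prop (b T tc.prop)}

/-- The value `d` occurs in the fact `F`. -/
def occursIn {Dom Shape : Type} (d : Dom) : Fact Dom Shape → Prop
  | .triple s p o => d = s ∨ d = p ∨ d = o
  | .lit n => d = n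
  | .shape _ n => d = n

variable {Dom RSym FSym Shape : Type} {ar : RSym → ℕ} {far : FSym → ℕ}

theorem Fint_eq (des : DES Dom RSym FSym Shape ar far) {f g : FSym}
    {a : Fin (far f) → Dom} {b : Fin (far g) → Dom} (h : des.Fint f a = des.Fint g b) :
    f = g ∧ HEq a b := by
  by_cases hfg : f = g
  · subst hfg
    exact ⟨rfl, heq_of_eq (des.FintInj f h)⟩
  · exact absurd h (des.FintDisj f g hfg a b)

/-- Typing of nodes in the universal-like solution. -/
def Ty (des : DES Dom RSym FSym Shape ar far) (bl : Shape → Dom) (T : Shape) (n : Dom) : Prop :=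
  (∃ g a, n = des.Fint g a ∧ T = des.ftype g) ∨ n = bl T

/-- Triples produced by the stds. -/
def T0 (des : DES Dom RSym FSym Shape ar far) (I : Set (RelFact Dom RSym ar))
    (s p o : Dom) : Prop :=
  ∃ σ ∈ des.stds, ∃ ν : σ.Var → Dom, bodyHolds σ ν I ∧
    s = des.Fint σ.f (fun i => ν (Sum.inl i)) ∧ p = σ.p ∧ o = Obj.eval des.Fint ν σ.obj

/-- Fresh value for each target. -/
def fresh (bl : Shape → Dom) (l : Dom) : Option Shape → Dom
  | none => l
  | some T => bl T

/-- Triples added to satisfy lower multiplicity bounds. -/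
def T1 (des : DES Dom RSym FSym Shape ar far) (I : Set (RelFact Dom RSym ar))
    (bl : Shape → Dom) (l : Dom) (s p o : Dom) : Prop :=
  ∃ T, Ty des bl T s ∧ ∃ tc ∈ des.shex.δ T, tc.prop = p ∧
    (tc.mult = Mult.one ∨ tc.mult = Mult.plus) ∧ (¬ ∃ y, T0 des I s p y) ∧
    o = fresh bl l tc.target

/-- Membership in the solution. -/
def solMem (des : DES Dom RSym FSym Shape ar far) (I : Set (RelFact Dom RSym ar))
    (bl : Shape → Dom) (l : Dom) : Fact Dom Shape → Prop
  | .triple s p o => T0 des I s p o ∨ T1 des I bl l s p o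
  | .lit n => n ∈ des.D.Lit
  | .shape T n => Ty des bl T n

theorem Ty_unique (des : DES Dom RSym FSym Shape ar far) {bl : Shape → Dom}
    (hb : ∀ T, bl T ∈ des.D.Blank) (hinj : Function.Injective bl) {T T' : Shape} {n : Dom}
    (h : Ty des bl T n) (h' : Ty des bl T' n) : T = T' := by
  have key : ∀ g a S, des.Fint g a ≠ bl S := fun g a S h =>
    Set.disjoint_left.1 des.D.disjIB (des.FintIri g a) (h ▸ hb S)
  rcases h with ⟨g, a, h1, h2⟩ | h <;> rcases h' with ⟨g', a', h1', h2'⟩ | h'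
  · obtain ⟨rfl, _⟩ := Fint_eq des (h1.symm.trans h1')
    rw [h2, h2']
  · exact absurd (h1.symm.trans h') (key _ _ _)
  · exact absurd (h1'.symm.trans h) (key _ _ _)
  · exact hinj (h.symm.trans h')

theorem obj_mem (des : DES Dom RSym FSym Shape ar far) {I : Set (RelFact Dom RSym ar)}
    (hI : validInst des.D des.fds I) (bl : Shape → Dom) (l : Dom)
    (σ : Std Dom RSym FSym ar far) (ν : σ.Var → Dom) (hν : bodyHolds σ ν I) :
    solMem des I bl l (factOf (σ.objType des.ftype) (Obj.eval des.Fint ν σ.obj)) := by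
  unfold Std.objType
  cases h : σ.obj with
  | var v =>
    obtain ⟨a, ha, i, rfl⟩ := σ.covers v
    exact (hI.2.1 _ (hν a ha) i).1
  | app g z => exact Or.inl ⟨g, _, rfl, rfl⟩

theorem stmt9 [Countable Dom] [Finite RSym] [Finite FSym] [Finite Shape]
    (des : DES Dom RSym FSym Shape ar far)
    (hmatch : ∀ σ1 σ2, contentious des σ1 σ2 → objMatch σ1 σ2) :
    consistent des ↔ keyCovered des := by
  constructor
  · intro hc σ1 σ2 ⟨h1, h2, hf, hp, tc, htc, htp, _, hm⟩ I hI ν1 ν2 hb1 hb2 hx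
    obtain ⟨J, hJ, _, _, hS⟩ := hc I hI
    obtain ⟨t1, s1, _⟩ := hJ σ1 h1 ν1 hb1
    obtain ⟨t2, _, _⟩ := hJ σ2 h2 ν2 hb2
    have hs : ∀ (f g : FSym) (a : Fin (far f) → Dom) (b : Fin (far g) → Dom), f = g → HEq a b →
        des.Fint f a = des.Fint g b := by
      rintro f _ a b rfl h
      rw [eq_of_heq h]
    rw [← hs _ _ _ _ hf hx, ← hp] at t2
    refine (hS _ tc htc).2.2 hm _ _ _ s1 ?_ ?_
    · rw [htp]; exact t1
    · rw [htp]; exact t2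
  · intro hk I hI
    obtain ⟨e, he⟩ := exists_injective_nat Shape
    let bl : Shape → Dom := fun T => (des.D.infBlank.natEmbedding _ (e T) : Dom)
    have hb : ∀ T, bl T ∈ des.D.Blank := fun T => (des.D.infBlank.natEmbedding _ (e T)).2
    have hinj : Function.Injective bl := fun a b h =>
      he ((des.D.infBlank.natEmbedding _).injective (Subtype.ext h))
    obtain ⟨l, hl⟩ := des.D.infLit.nonempty
    refine ⟨{F | solMem des I bl l F}, ?_, ?_, ?_, ?_⟩
    · intro σ hσ ν hν
      exact ⟨Or.inl ⟨σ, hσ, ν, hν, rfl, rfl, rfl⟩, Or.inl ⟨_, _, rfl, rfl⟩,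
        obj_mem des hI bl l σ ν hν⟩
    · rintro T n (⟨g, a, rfl, _⟩ | rfl)
      · exact Or.inl (des.FintIri g a)
      · exact Or.inr (hb T)
    · intro n h
      exact h
    · intro T tc htc
      refine ⟨?_, ?_, ?_⟩
      · rintro x y hx (⟨σ, hσ, ν, hν, rfl, hp, rfl⟩ | ⟨T', hT', tc', htc', hp, -, -, rfl⟩)
        · have hT : T = des.ftype σ.f := Ty_unique des hb hinj hx (Or.inl ⟨_, _, rfl, rfl⟩)
          subst hT
          rw [des.stConf σ hσ tc htc hp]
          exact obj_mem des hI bl l σ ν hν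
        · obtain rfl := Ty_unique des hb hinj hx hT'
          obtain rfl := des.shex.uniqueProp _ _ htc _ htc' hp.symm
          show solMem des I bl l _
          cases tc.target with
          | none => exact hl
          | some S => exact Or.inr rfl
      · intro hm x hx
        by_cases h : ∃ y, T0 des I x tc.prop y
        · obtain ⟨y, hy⟩ := h
          exact ⟨y, Or.inl hy⟩
        · exact ⟨_, Or.inr ⟨T, hx, tc, htc, rfl, hm, h, rfl⟩⟩
      · rintro hm x y z hx (hy | hy) (hz | hz)
        · obtain ⟨σ, hσ, ν, hν, rfl, hp, rfl⟩ := hy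
          obtain ⟨σ', hσ', ν', hν', hs, hp', rfl⟩ := hz
          have hT : T = des.ftype σ.f := Ty_unique des hb hinj hx (Or.inl ⟨_, _, rfl, rfl⟩)
          subst hT
          obtain ⟨hf, hx'⟩ := Fint_eq des hs
          exact hk σ σ' ⟨hσ, hσ', hf, hp.symm.trans hp', tc, htc, hp,
            des.stConf σ hσ tc htc hp, hm⟩ I hI ν ν' hν hν' hx'
        · obtain ⟨_, _, _, _, _, _, hn, _⟩ := hz
          exact absurd ⟨y, hy⟩ hn
        · obtain ⟨_, _, _, _, _, _, hn, _⟩ := hy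
          exact absurd ⟨z, hz⟩ hn
        · obtain ⟨T1, h1, tc1, ht1, hp1, -, -, rfl⟩ := hy
          obtain ⟨T2, h2, tc2, ht2, hp2, -, -, rfl⟩ := hz
          obtain rfl := Ty_unique des hb hinj h1 h2
          rw [des.shex.uniqueProp _ _ ht1 _ ht2 (hp1.trans hp2.symm)]

end RdfDE
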